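/- arXiv:2604.28108 — 2 statements merged into one kernel-verified Lean document; each statement's English description precedes it below -/
import Mathlib

section
/- Let C ∈ ℝ^{p×n}, Ĉ ∈ ℝ^{p×n_r}, P ∈ ℝ^{n×n_r}, S ∈ ℝ^{n×m_r}, and let M ∈ ℝ^{n×n} be symmetric with CᵀC ⪯ M (i.e., M − CᵀC is positive semidefinite). Suppose CP = Ĉ and CS = 0. Then for every x ∈ ℝⁿ, x̂ ∈ ℝ^{n_r}, û ∈ ℝ^{m_r} and ε ≥ 0, if (x − Px̂ − Sû)ᵀ M (x − Px̂ − Sû) ≤ ε², then ‖Cx − Ĉx̂‖ ≤ ε, where ‖·‖ is the Euclidean norm on ℝᵖ. -/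
open Matrix

/-- The Euclidean norm of a vector in `Fin k → ℝ`. -/
noncomputable def euclNorm {k : ℕ} (v : Fin k → ℝ) : ℝ :=
  ‖(WithLp.equiv 2 (Fin k → ℝ)).symm v‖

/-- If `M` is symmetric with `CᵀC ⪯ M`, `C*P = Chat` and `C*S = 0`,
then `(x − P·xhat − S·uhat)ᵀ M (x − P·xhat − S·uhat) ≤ ε²` implies
`‖C·x − Chat·xhat‖ ≤ ε` (Euclidean norm). -/
theorem output_error_bound {n nr mr p : ℕ}
    (C : Matrix (Fin p) (Fin n) ℝ) (Chat : Matrix (Fin p) (Fin nr) ℝ)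
    (P : Matrix (Fin n) (Fin nr) ℝ) (S : Matrix (Fin n) (Fin mr) ℝ)
    (M : Matrix (Fin n) (Fin n) ℝ)
    (hMsymm : M.IsSymm) (hCM : (M - Cᵀ * C).PosSemidef)
    (hCP : C * P = Chat) (hCS : C * S = 0)
    (ε : ℝ) (hε : 0 ≤ ε) :
    ∀ (x : Fin n → ℝ) (xhat : Fin nr → ℝ) (uhat : Fin mr → ℝ),
      (x - P.mulVec xhat - S.mulVec uhat) ⬝ᵥ M.mulVec (x - P.mulVec xhat - S.mulVec uhat) ≤ ε ^ 2 →
      euclNorm (C.mulVec x - Chat.mulVec xhat) ≤ ε := by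
  intro x xhat uhat h
  have key : C.mulVec x - Chat.mulVec xhat = C.mulVec (x - P.mulVec xhat - S.mulVec uhat) := by
    rw [mulVec_sub, mulVec_sub, mulVec_mulVec, mulVec_mulVec, hCP, hCS, zero_mulVec, sub_zero]
  rw [key]
  generalize x - P.mulVec xhat - S.mulVec uhat = e at h
  have h1 := hCM.dotProduct_mulVec_nonneg e
  rw [star_trivial, sub_mulVec, dotProduct_sub, ← mulVec_mulVec, dotProduct_mulVec e Cᵀ,
    vecMul_transpose] at h1
  have h2 : euclNorm (C.mulVec e) ^ 2 = C.mulVec e ⬝ᵥ C.mulVec e := by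
    unfold euclNorm
    rw [EuclideanSpace.norm_sq_eq]
    simp [dotProduct, sq]
  refine (abs_le_of_sq_le_sq' ?_ hε).2
  linarith
end

section
/- Let A ∈ ℝ^{n×n}, B ∈ ℝ^{n×m}, Â ∈ ℝ^{n_r×n_r}, B̂ ∈ ℝ^{n_r×m_r}, K ∈ ℝ^{m×n}, Q ∈ ℝ^{m×n_r}, R ∈ ℝ^{m×m_r}, P ∈ ℝ^{n×n_r}, S ∈ ℝ^{n×m_r}. Let x : ℝ → ℝⁿ, x̂ : ℝ → ℝ^{n_r}, û : ℝ → ℝ^{m_r} be differentiable at a time t, and define e(s) = x(s) − P x̂(s) − S û(s). If x'(t) = A x(t) + B (K e(t) + Q x̂(t) + R û(t)) and x̂'(t) = Â x̂(t) + B̂ û(t), then e is differentiable at t with e'(t) = (A + BK) e(t) + (AP − PÂ + BQ) x̂(t) + (AS + BR − PB̂) û(t) − S û'(t). -/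
open Matrix

/-- Error dynamics under the interface function: if
`x'(t) = A x(t) + B (K e(t) + Q xhat(t) + R uhat(t))` with
`e(s) = x(s) − P xhat(s) − S uhat(s)`, and `xhat'(t) = Ahat xhat(t) + Bhat uhat(t)`,
and `uhat` has derivative `uhat'` at `t`, then `e` is differentiable at `t` with
`e'(t) = (A+BK) e(t) + (AP − P Ahat + BQ) xhat(t) + (AS + BR − P Bhat) uhat(t) − S uhat'`. -/
theorem error_dynamics {n m nr mr : ℕ}
    (A : Matrix (Fin n) (Fin n) ℝ) (B : Matrix (Fin n) (Fin m) ℝ)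
    (Ahat : Matrix (Fin nr) (Fin nr) ℝ) (Bhat : Matrix (Fin nr) (Fin mr) ℝ)
    (K : Matrix (Fin m) (Fin n) ℝ) (Q : Matrix (Fin m) (Fin nr) ℝ)
    (R : Matrix (Fin m) (Fin mr) ℝ)
    (P : Matrix (Fin n) (Fin nr) ℝ) (S : Matrix (Fin n) (Fin mr) ℝ)
    (x : ℝ → Fin n → ℝ) (xhat : ℝ → Fin nr → ℝ) (uhat : ℝ → Fin mr → ℝ)
    (e : ℝ → Fin n → ℝ)
    (he : ∀ s, e s = x s - P.mulVec (xhat s) - S.mulVec (uhat s))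
    (t : ℝ) (uhat' : Fin mr → ℝ)
    (hx : HasDerivAt x
      (A.mulVec (x t) + B.mulVec (K.mulVec (e t) + Q.mulVec (xhat t) + R.mulVec (uhat t))) t)
    (hxhat : HasDerivAt xhat (Ahat.mulVec (xhat t) + Bhat.mulVec (uhat t)) t)
    (huhat : HasDerivAt uhat uhat' t) :
    HasDerivAt e
      ((A + B * K).mulVec (e t) + (A * P - P * Ahat + B * Q).mulVec (xhat t) +
        (A * S + B * R - P * Bhat).mulVec (uhat t) - S.mulVec uhat') t := by
  have hP : HasDerivAt (fun s => P.mulVec (xhat s))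
      (P.mulVec (Ahat.mulVec (xhat t) + Bhat.mulVec (uhat t))) t :=
    (LinearMap.toContinuousLinearMap P.mulVecLin).hasFDerivAt.comp_hasDerivAt t hxhat
  have hS : HasDerivAt (fun s => S.mulVec (uhat s)) (S.mulVec uhat') t :=
    (LinearMap.toContinuousLinearMap S.mulVecLin).hasFDerivAt.comp_hasDerivAt t huhat
  have h := (hx.sub hP).sub hS
  have hfun : e = (x - fun s => P.mulVec (xhat s)) - fun s => S.mulVec (uhat s) := by
    funext s
    exact he s
  have hxt : x t = e t + P.mulVec (xhat t) + S.mulVec (uhat t) := by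
    rw [he t]; abel
  rw [← hfun, hxt] at h
  refine h.congr_deriv ?_
  simp only [Matrix.add_mulVec, Matrix.sub_mulVec, Matrix.mulVec_add, Matrix.mulVec_mulVec]
  abel
end
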